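/- Let Y ∈ ℝ⟦X⟧ be the unique formal power series with zero constant term satisfying Y = X·exp(Y) (the tree function, with n-th coefficient n^{n−1}/n!). For t ∈ ℝ, let F_t ∈ ℝ⟦X⟧ be the formal power series whose n-th coefficient, for n ≥ 1, is ∑ |Aut(T)|^{−t} summed over the isomorphism classes of rooted labeled trees on n vertices, and let c(j,t) be as in the Pólya functional equation. Define Ξ = X · exp(∑_{j≥2} (c(j,2)/j) · F_{2j}(X^j)) ∈ ℝ⟦X⟧, a power series with zero constant term. Then F_2 = Y ∘ Ξ, the substitution of Ξ into Y. -/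

import Mathlib

open scoped Classical BigOperators

/-- A rooted labeled tree on `n` vertices: a simple graph on `Fin n` that is a
tree, together with a distinguished root vertex. -/
structure RTree (n : ℕ) where
  graph : SimpleGraph (Fin n)
  isTree : graph.IsTree
  root : Fin n

namespace RTree

/-- Two rooted labeled trees are isomorphic if there is a graph isomorphism
mapping root to root. -/
def Isom {n : ℕ} (T₁ T₂ : RTree n) : Prop :=
  ∃ φ : T₁.graph ≃g T₂.graph, φ T₁.root = T₂.root

/-- The out-degree (number of children) of a vertex: its degree if it is the
root and its degree minus one otherwise. -/
noncomputable def outdeg {n : ℕ} (T : RTree n) (v : Fin n) : ℕ :=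
  if v = T.root then (T.graph.neighborSet v).ncard
  else (T.graph.neighborSet v).ncard - 1

/-- The number of root-fixing graph automorphisms. -/
noncomputable def autCard {n : ℕ} (T : RTree n) : ℕ :=
  Nat.card {φ : T.graph ≃g T.graph // φ T.root = T.root}

instance finite {n : ℕ} : Finite (RTree n) := by
  have h : Function.Injective (fun T : RTree n => (T.graph, T.root)) := by
    rintro ⟨g₁, h₁, r₁⟩ ⟨g₂, h₂, r₂⟩ h
    simp_all
  exact Finite.of_injective _ h

noncomputable instance fintype {n : ℕ} : Fintype (RTree n) := Fintype.ofFinite _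

end RTree

/-- The isomorphism classes of rooted labeled trees on `n` vertices (Pólya
trees of size `n`). -/
def Polya (n : ℕ) : Type :=
  Quot (fun T₁ T₂ : RTree n => T₁.Isom T₂)

instance (n : ℕ) : Finite (Polya n) :=
  Finite.of_surjective (Quot.mk _) Quot.exists_rep

noncomputable instance (n : ℕ) : Fintype (Polya n) := Fintype.ofFinite _

/-- The coefficient `c(j,t)` of the Pólya-tree functional equation:
`c(j,t) = j · ∑_{λ ⊢ j} ((−1)^{ℓ(λ)−1}/ℓ(λ)) · (ℓ(λ)!/∏_m λ_m!) · ∏_m (m!)^{−λ_m t}`. -/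
noncomputable def polyaC (j : ℕ) (t : ℝ) : ℝ :=
  j * ∑ P : Nat.Partition j,
    ((-1 : ℝ) ^ (Multiset.card P.parts - 1) / (Multiset.card P.parts : ℝ)) *
      (((Multiset.card P.parts).factorial : ℝ) /
        ∏ m ∈ Finset.range (j + 1), ((P.parts.count m).factorial : ℝ)) *
      ∏ m ∈ Finset.range (j + 1),
        ((m.factorial : ℝ)) ^ (-(P.parts.count m : ℝ) * t)

/-- The exponential `exp(G) = ∑_{k ≥ 0} G^k/k!` of a formal power series;
for `G` with zero constant term only the terms with `k ≤ n` contribute to the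
`n`-th coefficient, so the defining truncated sum is exact. -/
noncomputable def pexp (G : PowerSeries ℝ) : PowerSeries ℝ :=
  PowerSeries.mk fun n =>
    ∑ k ∈ Finset.range (n + 1), PowerSeries.coeff n (G ^ k) / (k.factorial : ℝ)

/-- The series `∑_{j ≥ 1} (c(j,t)/j) · F_{jt}(X^j)`, where `F_{jt}(X^j)` is
the substitution of `X^j` into `F (j·t)`: its `n`-th coefficient is the
`(n/j)`-th coefficient of `F (j·t)` when `j ∣ n` and `0` otherwise.  The sum is
coefficientwise finite since `F_{jt}(X^j)` has order at least `j` (each `F s`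
has zero constant coefficient), so only `1 ≤ j ≤ n` contribute. -/
noncomputable def polyaSum (F : ℝ → PowerSeries ℝ) (t : ℝ) : PowerSeries ℝ :=
  PowerSeries.mk fun n =>
    ∑ j ∈ Finset.Icc 1 n,
      (polyaC j t / (j : ℝ)) *
        (if j ∣ n then PowerSeries.coeff (n / j) (F ((j : ℝ) * t)) else 0)

/-- Composition `Y ∘ G` of formal power series, for `G` with zero constant
term: the `n`-th coefficient is `∑_{k ≤ n} (coeff k Y) · coeff n (G^k)`, which
is the standard substitution of `G` into `Y` since `G^k` has order at least
`k`. -/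
noncomputable def pcomp (Y G : PowerSeries ℝ) : PowerSeries ℝ :=
  PowerSeries.mk fun n =>
    ∑ k ∈ Finset.range (n + 1), PowerSeries.coeff k Y * PowerSeries.coeff n (G ^ k)

/-- The series `Ξ = X · exp(∑_{j ≥ 2} (c(j,2)/j) · F_{2j}(X^j))`. -/
noncomputable def xiSeries (F : ℝ → PowerSeries ℝ) : PowerSeries ℝ :=
  PowerSeries.X * pexp (PowerSeries.mk fun n =>
    ∑ j ∈ Finset.Icc 2 n,
      (polyaC j 2 / (j : ℝ)) *
        (if j ∣ n then PowerSeries.coeff (n / j) (F ((j : ℝ) * 2)) else 0))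


section PSer
open PowerSeries

lemma coeff_pow_eq_zero' {G : PowerSeries ℝ} (hG : constantCoeff G = 0) {n k : ℕ} (h : n < k) :
    coeff n (G ^ k) = 0 := by
  have : X ^ k ∣ G ^ k := pow_dvd_pow_of_dvd (X_dvd_iff.mpr hG) k
  exact X_pow_dvd_iff.mp this n h

lemma coeff_subst_trunc {G : PowerSeries ℝ} (hG : constantCoeff G = 0) (f : PowerSeries ℝ) (n : ℕ) :
    coeff n (f.subst G) = ∑ k ∈ Finset.range (n + 1), coeff k f * coeff n (G ^ k) := by
  rw [coeff_subst' (HasSubst.of_constantCoeff_zero' hG)]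
  simp only [smul_eq_mul]
  apply finsum_eq_sum_of_support_subset
  intro k hk
  simp only [Function.mem_support] at hk
  by_contra h
  simp only [Finset.coe_range, Set.mem_Iio, not_lt] at h
  exact hk (by rw [coeff_pow_eq_zero' hG (by omega), mul_zero])

lemma pcomp_eq {G : PowerSeries ℝ} (hG : constantCoeff G = 0) (f : PowerSeries ℝ) :
    pcomp f G = f.subst G := by
  ext n; rw [coeff_subst_trunc hG]; simp [pcomp]

lemma pexp_eq {G : PowerSeries ℝ} (hG : constantCoeff G = 0) :
    pexp G = (exp ℝ).subst G := by
  ext n; rw [coeff_subst_trunc hG]; simp [pexp, coeff_exp, div_eq_inv_mul]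

lemma constantCoeff_pexp {G : PowerSeries ℝ} : constantCoeff (pexp G) = 1 := by
  rw [← coeff_zero_eq_constantCoeff_apply]; simp [pexp]

lemma deriv_pexp {G : PowerSeries ℝ} (hG : constantCoeff G = 0) :
    d⁄dX ℝ (pexp G) = d⁄dX ℝ G * pexp G := by
  rw [pexp_eq hG, derivative_subst (HasSubst.of_constantCoeff_zero' hG), derivative_exp, mul_comm]

lemma ode_unique {A B L : PowerSeries ℝ} (hA : d⁄dX ℝ A = L * A) (hB : d⁄dX ℝ B = L * B)
    (cA : constantCoeff A = 1) (cB : constantCoeff B = 1) : A = B := by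
  have hB0 : constantCoeff B ≠ 0 := by rw [cB]; norm_num
  have h1 : B * B⁻¹ = 1 := PowerSeries.mul_inv_cancel B hB0
  have : A * B⁻¹ = 1 := by
    apply derivative.ext
    · rw [Derivation.leibniz, derivative_inv', hA, hB]
      simp only [smul_eq_mul]
      have : d⁄dX ℝ (1 : PowerSeries ℝ) = 0 := derivative_one
      rw [this]
      linear_combination (-(A * L * B⁻¹)) * h1
    · simp [cA, cB]
  calc A = A * (B * B⁻¹) := by rw [h1, mul_one]
    _ = (A * B⁻¹) * B := by ring
    _ = B := by rw [this, one_mul]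

lemma pexp_add {G H : PowerSeries ℝ} (hG : constantCoeff G = 0) (hH : constantCoeff H = 0) :
    pexp (G + H) = pexp G * pexp H := by
  apply ode_unique (L := d⁄dX ℝ (G + H)) (deriv_pexp (by simp [hG, hH]))
  · rw [Derivation.leibniz, deriv_pexp hG, deriv_pexp hH]; simp; ring
  · exact constantCoeff_pexp
  · simp [constantCoeff_pexp]

lemma pexp_zero : pexp 0 = 1 := by
  have h := pexp_add (G := 0) (H := 0) (by simp) (by simp)
  have h2 : constantCoeff (pexp 0) = 1 := constantCoeff_pexp
  have h3 : pexp 0 ≠ 0 := by intro h; rw [h] at h2; simp at h2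
  rw [add_zero] at h
  exact (mul_left_cancel₀ h3 (by rw [mul_one]; exact h)).symm

lemma pexp_sum {ι : Type*} (s : Finset ι) (G : ι → PowerSeries ℝ)
    (hG : ∀ i, constantCoeff (G i) = 0) : pexp (∑ i ∈ s, G i) = ∏ i ∈ s, pexp (G i) := by
  induction s using Finset.induction_on with
  | empty => simp [pexp_zero]
  | insert a s ha ih =>
    rw [Finset.sum_insert ha, Finset.prod_insert ha, pexp_add (hG a) (by simp [hG]), ih]

lemma pexp_sub_one_dvd {D : PowerSeries ℝ} (hD : constantCoeff D = 0) :
    D ∣ pexp D - 1 := by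
  have hs := HasSubst.of_constantCoeff_zero' hD
  obtain ⟨W, hW⟩ : X ∣ (exp ℝ - 1) := X_dvd_iff.mpr (by simp)
  refine ⟨W.subst D, ?_⟩
  rw [pexp_eq hD]
  have h1 : (1 : PowerSeries ℝ).subst D = (1 : PowerSeries ℝ) := by
    rw [← coe_substAlgHom hs]; simp
  have := congrArg (PowerSeries.subst D) hW
  rw [subst_sub hs, subst_mul hs, subst_X hs, h1] at this
  exact this

lemma coeff_pexp_congr {G H : PowerSeries ℝ} (hG : constantCoeff G = 0)
    (hH : constantCoeff H = 0) (n : ℕ) (h : ∀ k ≤ n, coeff k G = coeff k H) :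
    coeff n (pexp G) = coeff n (pexp H) := by
  have hd : X ^ (n + 1) ∣ G - H := X_pow_dvd_iff.mpr (by
    intro m hm; simp [h m (by omega)])
  have h1 : pexp G = pexp H * pexp (G - H) := by
    rw [← pexp_add hH (by simp [hG, hH])]; congr 1; ring
  have h2 : X ^ (n + 1) ∣ pexp G - pexp H := by
    rw [h1, show pexp H * pexp (G - H) - pexp H = pexp H * (pexp (G - H) - 1) by ring]
    exact Dvd.dvd.mul_left (hd.trans (pexp_sub_one_dvd (by simp [hG, hH]))) _
  have := X_pow_dvd_iff.mp h2 n (by omega)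
  rw [map_sub, sub_eq_zero] at this
  exact this

lemma tree_fun_unique {Z Z' Xi : PowerSeries ℝ} (h0 : constantCoeff Xi = 0)
    (h : Z = Xi * pexp Z) (h' : Z' = Xi * pexp Z') : Z' = Z := by
  have c : constantCoeff Z = 0 := by rw [h]; simp [h0]
  have c' : constantCoeff Z' = 0 := by rw [h']; simp [h0]
  obtain ⟨V, hV⟩ := pexp_sub_one_dvd (D := Z' - Z) (by simp [c, c'])
  have h1 : pexp Z' = pexp Z * pexp (Z' - Z) := by
    rw [← pexp_add c (by simp [c, c'])]; congr 1; ring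
  have h2 : (Z' - Z) * (1 - Z * V) = 0 := by
    have : Z' - Z = Z * (pexp (Z' - Z) - 1) := by
      linear_combination h' + Xi * h1 - pexp (Z' - Z) * h
    rw [hV] at this
    linear_combination this
  rcases mul_eq_zero.mp h2 with h3 | h3
  · exact sub_eq_zero.mp h3
  · have := congrArg constantCoeff h3
    simp [c] at this

lemma tree_comp {Y Xi F : PowerSeries ℝ} (h0 : constantCoeff Xi = 0)
    (hY0 : constantCoeff Y = 0) (hY : Y = X * pexp Y) (hF : F = Xi * pexp F) :
    F = pcomp Y Xi := by
  have hs := HasSubst.of_constantCoeff_zero' h0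
  have hsY := HasSubst.of_constantCoeff_zero' hY0
  apply tree_fun_unique h0 _ hF
  rw [pcomp_eq h0]
  have c : constantCoeff (Y.subst Xi) = 0 := by
    rw [← coeff_zero_eq_constantCoeff_apply, coeff_subst_trunc h0]; simp [hY0]
  rw [pexp_eq c]
  have := congrArg (PowerSeries.subst Xi) hY
  rw [subst_mul hs, subst_X hs, pexp_eq hY0, subst_comp_subst_apply hsY hs] at this
  exact this

/-- the series of `1/m!^2` -/
noncomputable def phi : PowerSeries ℝ := PowerSeries.mk fun m => ((m.factorial : ℝ)) ^ (-(2:ℝ))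

lemma constantCoeff_phi : constantCoeff phi = 1 := by
  rw [← coeff_zero_eq_constantCoeff_apply]; simp [phi]

lemma pexp_logOf {f : PowerSeries ℝ} (hf : constantCoeff f = 1) : pexp (logOf f) = f := by
  have hc : constantCoeff (logOf f) = 0 := constantCoeff_logOf hf
  have hs : HasSubst (f - 1) := HasSubst.of_constantCoeff_zero' (by simp [hf])
  apply ode_unique (deriv_pexp hc) _ constantCoeff_pexp hf
  rw [logOf_eq, derivative_subst hs]
  have h1 : d⁄dX ℝ (log ℝ) * (1 + X) = 1 := by
    rw [deriv_log]
    ext n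
    cases n with
    | zero => simp
    | succ n => 
      rw [mul_add, map_add, mul_one, coeff_succ_mul_X]
      simp [coeff_one, pow_succ]
  have h2 := congrArg (PowerSeries.subst (f - 1)) h1
  have h3 : (1 : PowerSeries ℝ).subst (f - 1) = (1 : PowerSeries ℝ) := by
    rw [← coe_substAlgHom hs]; simp
  rw [subst_mul hs, subst_add hs, subst_X hs, h3] at h2
  have h4 : d⁄dX ℝ (f - 1) = d⁄dX ℝ f := by
    rw [map_sub, derivative_one, sub_zero]
  rw [h4]
  linear_combination (- d⁄dX ℝ f) * h2

end PSer

section LogC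
open PowerSeries

lemma coeff_pow_congr {G H : PowerSeries ℝ} (n : ℕ) (h : ∀ k ≤ n, coeff k G = coeff k H) (e : ℕ) :
    coeff n (G ^ e) = coeff n (H ^ e) := by
  have hd : X ^ (n + 1) ∣ G - H := X_pow_dvd_iff.mpr (by
    intro m hm; simp [h m (by omega)])
  have := X_pow_dvd_iff.mp (hd.trans (sub_dvd_pow_sub_pow G H e)) n (by omega)
  rw [map_sub, sub_eq_zero] at this
  exact this

lemma coeff_phi_sub_one_pow (j k : ℕ) :
    coeff j ((phi - 1) ^ k) =
      ∑ c ∈ (Finset.piAntidiag (Finset.Icc 1 j) k).filter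
          (fun c => ∑ m ∈ Finset.Icc 1 j, m * c m = j),
        (Nat.multinomial (Finset.Icc 1 j) c : ℝ) *
          ∏ m ∈ Finset.Icc 1 j, (((m.factorial : ℝ)) ^ (-(2:ℝ))) ^ c m := by
  rw [coeff_pow_congr (H := ∑ m ∈ Finset.Icc 1 j, C (((m.factorial : ℝ)) ^ (-(2:ℝ))) * X ^ m)]
  · rw [Finset.sum_pow_eq_sum_piAntidiag, map_sum, Finset.sum_filter]
    apply Finset.sum_congr rfl
    intro c hc
    simp_rw [mul_pow, Finset.prod_mul_distrib, ← pow_mul, Finset.prod_pow_eq_pow_sum, ← map_pow,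
      ← map_prod]
    rw [show ((Nat.multinomial (Finset.Icc 1 j) c : ℕ) : PowerSeries ℝ)
      = C (Nat.multinomial (Finset.Icc 1 j) c : ℝ) by simp, coeff_C_mul, coeff_C_mul, coeff_X_pow]
    simp only [@eq_comm _ j, mul_ite, mul_one, mul_zero]
  · intro i hi
    rw [map_sum]
    simp only [coeff_C_mul, coeff_X_pow, mul_ite, mul_one, mul_zero, map_sub, coeff_one]
    rw [Finset.sum_ite_eq]
    by_cases h0 : i = 0
    · simp [h0, phi]
    · rw [if_neg h0, if_pos (by simp; omega)]; simp [phi]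

lemma coeff_logOf_phi {j : ℕ} (hj : 1 ≤ j) : coeff j (logOf phi) = polyaC j 2 / j := by
  have hj0 : (j : ℝ) ≠ 0 := by positivity
  rw [polyaC, mul_div_cancel_left₀ _ hj0, logOf_eq, coeff_subst_trunc (by simp [constantCoeff_phi])]
  rw [← Finset.sum_fiberwise_of_maps_to (s := Finset.univ) (t := Finset.range (j + 1))
    (g := fun P : Nat.Partition j => Multiset.card P.parts)]
  · apply Finset.sum_congr rfl
    intro k hk
    rw [coeff_phi_sub_one_pow, Finset.mul_sum]
    symm
    have hcount : ∀ P : Nat.Partition j, ∀ m, m ∉ Finset.Icc 1 j → P.parts.count m = 0 := by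
      intro P m hm
      rw [Multiset.count_eq_zero]
      intro h
      exact hm (Finset.mem_Icc.mpr ⟨P.parts_pos h, by
        rw [← P.parts_sum]; exact Multiset.le_sum_of_mem h⟩)
    have hsub : ∀ P : Nat.Partition j, P.parts.toFinset ⊆ Finset.Icc 1 j := by
      intro P m hm
      by_contra h
      exact (Multiset.count_eq_zero.mp (hcount P m h)) (by simpa using hm)
    have hins : Finset.range (j + 1) = insert 0 (Finset.Icc 1 j) := by
      ext x; simp; omega
    refine Finset.sum_bij (fun P _ m => P.parts.count m) ?_ ?_ ?_ ?_
    · intro P hP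
      simp only [Finset.mem_filter, Finset.mem_univ, true_and] at hP
      simp only [Finset.mem_filter, Finset.mem_piAntidiag]
      refine ⟨⟨?_, ?_⟩, ?_⟩
      · rw [← hP, Multiset.sum_count_eq_card (fun a ha => hsub P (by simpa using ha))]
      · intro m hm
        by_contra h
        exact hm (hcount P m h)
      · conv_rhs => rw [← P.parts_sum]
        rw [Finset.sum_multiset_count_of_subset P.parts _ (hsub P)]
        simp [mul_comm]
    · intro P _ Q _ h
      ext1
      ext m
      exact congrFun h m
    · intro c hc
      simp only [Finset.mem_filter, Finset.mem_piAntidiag] at hc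
      obtain ⟨⟨h1, h2⟩, h3⟩ := hc
      have hcnt : ∀ m, (∑ i ∈ Finset.Icc 1 j, Multiset.replicate (c i) i).count m = c m := by
        intro m
        rw [Multiset.count_sum']
        simp only [Multiset.count_replicate]
        rw [Finset.sum_ite_eq']
        split_ifs with h
        · rfl
        · by_contra h'
          exact h (h2 m (Ne.symm h'))
      refine ⟨⟨∑ i ∈ Finset.Icc 1 j, Multiset.replicate (c i) i, ?_, ?_⟩, ?_, ?_⟩
      · intro i hi
        have := Multiset.count_pos.mpr hi
        rw [hcnt] at this
        have := h2 i (by omega)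
        simp at this; omega
      · conv_rhs => rw [← h3]
        rw [Multiset.sum_sum]
        simp [mul_comm]
      · simp [h1]
      · funext m; exact hcnt m
    · intro P hP
      simp only [Finset.mem_filter, Finset.mem_univ, true_and] at hP
      have hsum : ∑ m ∈ Finset.Icc 1 j, P.parts.count m = k := by
        rw [← hP, Multiset.sum_count_eq_card (fun a ha => hsub P (by simpa using ha))]
      rw [hins, Finset.prod_insert (by simp), Finset.prod_insert (by simp), hcount P 0 (by simp), hP]
      have hm := Nat.multinomial_spec (Finset.Icc 1 j) (fun m => P.parts.count m)
      rw [hsum] at hm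
      have hm' : (∏ m ∈ Finset.Icc 1 j, ((P.parts.count m).factorial : ℝ)) *
         (Nat.multinomial (Finset.Icc 1 j) (fun m => P.parts.count m) : ℝ) = (k.factorial : ℝ) := by
        exact_mod_cast hm
      have hp : ∏ m ∈ Finset.Icc 1 j, ((P.parts.count m).factorial : ℝ) ≠ 0 := by
        apply Finset.prod_ne_zero_iff.mpr; intro m _; positivity
      have e1 : coeff k (log ℝ) = (-1 : ℝ) ^ (k - 1) / (k : ℝ) := by
        rw [coeff_log]
        cases k with
        | zero => simp
        | succ k => simp [pow_succ]
      have e2 : ∀ m ∈ Finset.Icc 1 j, ((m.factorial : ℝ)) ^ (-(P.parts.count m : ℝ) * 2)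
          = (((m.factorial : ℝ)) ^ (-(2:ℝ))) ^ P.parts.count m := by
        intro m _
        rw [← Real.rpow_natCast, ← Real.rpow_mul (by positivity)]
        congr 1; ring
      rw [e1, Finset.prod_congr rfl e2, ← hm']
      simp
      field_simp
  · intro P _
    simp only [Finset.mem_range]
    have : Multiset.card P.parts ≤ P.parts.sum := by
      have := Multiset.card_nsmul_le_sum (s := P.parts) (a := 1) (fun x hx => P.parts_pos hx)
      simpa using this
    rw [P.parts_sum] at this
    omega

lemma polyaC_one : polyaC 1 2 = 1 := by
  have h := coeff_logOf_phi (j := 1) le_rfl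
  rw [logOf_eq, coeff_subst_trunc (by simp [constantCoeff_phi])] at h
  simp [Finset.sum_range_succ, phi, coeff_one] at h
  exact h.symm

end LogC

/-- A finite rooted tree given by its parent function. -/
structure PT where
  V : Type
  fin : Finite V
  p : V → V
  r : V
  fix : p r = r
  reach : ∀ v, ∃ k : ℕ, p^[k] v = r

namespace PT

instance (T : PT) : Finite T.V := T.fin

/-- Isomorphisms of parent functions. -/
abbrev Iso (T S : PT) : Type := {e : T.V ≃ S.V // ∀ v, e (T.p v) = S.p (e v)}

def Iso.refl (T : PT) : Iso T T := ⟨Equiv.refl _, fun _ => rfl⟩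

def Iso.symm {T S : PT} (e : Iso T S) : Iso S T :=
  ⟨e.1.symm, fun v => by rw [Equiv.symm_apply_eq, e.2]; simp⟩

def Iso.trans {T S R : PT} (e : Iso T S) (f : Iso S R) : Iso T R :=
  ⟨e.1.trans f.1, fun v => by simp [e.2, f.2]⟩

lemma iter_root (T : PT) (k : ℕ) : T.p^[k] T.r = T.r := Function.iterate_fixed T.fix k

lemma eq_root_of_fix (T : PT) {v : T.V} (h : T.p v = v) : v = T.r := by
  obtain ⟨k, hk⟩ := T.reach v
  rw [Function.iterate_fixed h k] at hk
  exact hk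

lemma Iso.root {T S : PT} (e : Iso T S) : e.1 T.r = S.r := by
  apply S.eq_root_of_fix
  rw [← e.2, T.fix]

lemma Iso.card_eq {T S : PT} (e : Iso T S) : Nat.card T.V = Nat.card S.V := Nat.card_congr e.1

lemma Iso.card_aut {T S : PT} (e : Iso T S) : Nat.card (Iso T T) = Nat.card (Iso S S) := by
  apply Nat.card_congr
  refine ⟨fun f => (e.symm.trans f).trans e, fun f => (e.trans f).trans e.symm, ?_, ?_⟩
  · intro f; apply Subtype.ext; ext v; simp [Iso.trans, Iso.symm]
  · intro f; apply Subtype.ext; ext v; simp [Iso.trans, Iso.symm]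

/-- Induction along the parent function. -/
lemma ind (T : PT) {q : T.V → Prop} (h0 : q T.r) (h : ∀ v, v ≠ T.r → q (T.p v) → q v) :
    ∀ v, q v := by
  have : ∀ k v, T.p^[k] v = T.r → q v := by
    intro k
    induction k with
    | zero => intro v hv; simp at hv; rw [hv]; exact h0
    | succ k ih =>
      intro v hv
      by_cases hr : v = T.r
      · rw [hr]; exact h0
      · exact h v hr (ih _ (by simpa using hv))
  intro v
  obtain ⟨k, hk⟩ := T.reach v
  exact this k v hk

/-- parent function of the join -/
noncomputable def joinP {ι : Type} (f : ι → PT) :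
    Option (Σ i, (f i).V) → Option (Σ i, (f i).V)
  | none => none
  | some x => if x.2 = (f x.1).r then none else some ⟨x.1, (f x.1).p x.2⟩

/-- The tree obtained by joining a family of trees to a new root. -/
noncomputable def join {ι : Type} [Finite ι] (f : ι → PT) : PT where
  V := Option (Σ i, (f i).V)
  fin := inferInstance
  p := joinP f
  r := none
  fix := rfl
  reach := by
    rintro (_ | ⟨i, v⟩)
    · exact ⟨0, rfl⟩
    · revert v
      refine (f i).ind ?_ ?_
      · exact ⟨1, by simp [joinP]⟩
      · rintro v hv ⟨k, hk⟩
        exact ⟨k + 1, by simpa [joinP, hv] using hk⟩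

set_option linter.unusedSectionVars false

variable {ι κ : Type} [Finite ι] [Finite κ]

lemma join_p_root (f : ι → PT) (i : ι) : (join f).p (some ⟨i, (f i).r⟩) = none := by
  simp [join, joinP]

lemma join_p_some (f : ι → PT) {i : ι} {v : (f i).V} (h : v ≠ (f i).r) :
    (join f).p (some ⟨i, v⟩) = some ⟨i, (f i).p v⟩ := by
  simp [join, joinP, h]

/-- Joining isomorphisms. -/
noncomputable def joinIso (f : ι → PT) (g : κ → PT)
    (x : Σ σ : ι ≃ κ, ∀ i, Iso (f i) (g (σ i))) : Iso (join f) (join g) :=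
  ⟨Equiv.optionCongr (Equiv.sigmaCongr x.1 (fun i => (x.2 i).1)), by
    rintro (_ | ⟨i, v⟩)
    · rfl
    · by_cases h : v = (f i).r
      · subst h
        rw [join_p_root]
        have := join_p_root g (x.1 i)
        rw [← (x.2 i).root] at this
        exact this.symm
      · rw [join_p_some f h]
        have h' : (x.2 i).1 v ≠ (g (x.1 i)).r := by
          rw [← (x.2 i).root]; exact fun hh => h ((x.2 i).1.injective hh)
        have := join_p_some g h'
        rw [← (x.2 i).2] at this
        exact this.symm⟩

lemma some_inj (f : ι → PT) {i j : ι} {v : (f i).V} {w : (f j).V}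
    (h : (some ⟨i, v⟩ : Option (Σ i, (f i).V)) = some ⟨j, w⟩) : i = j ∧ HEq v w := by
  simpa using h

lemma some_inj' (f : ι → PT) {i : ι} {v w : (f i).V}
    (h : (some ⟨i, v⟩ : Option (Σ i, (f i).V)) = some ⟨i, w⟩) : v = w := by
  simpa using h

lemma joinIso_some (f : ι → PT) (g : κ → PT)
    (x : Σ σ : ι ≃ κ, ∀ i, Iso (f i) (g (σ i))) (i : ι) (v : (f i).V) :
    (joinIso f g x).1 (some ⟨i, v⟩) = some ⟨x.1 i, (x.2 i).1 v⟩ := rfl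

lemma joinIso_injective (f : ι → PT) (g : κ → PT) : Function.Injective (joinIso f g) := by
  rintro ⟨σ, a⟩ ⟨τ, b⟩ h
  have h1 : ∀ i v, (some ⟨σ i, (a i).1 v⟩ : Option (Σ i, (g i).V)) = some ⟨τ i, (b i).1 v⟩ := by
    intro i v
    rw [← joinIso_some f g ⟨σ, a⟩, ← joinIso_some f g ⟨τ, b⟩, h]
  have hσ : σ = τ := by
    ext i
    have := h1 i (f i).r
    simp only [Option.some.injEq, Sigma.mk.injEq] at this
    exact this.1
  subst hσ
  congr 1
  funext i
  apply Subtype.ext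
  ext v
  simpa using h1 i v

lemma joinIso_surjective (f : ι → PT) (g : κ → PT) : Function.Surjective (joinIso f g) := by
  intro e
  have hroot : e.1 none = none := e.root
  have hr : ∀ i, ∃ j, e.1 (some ⟨i, (f i).r⟩) = some ⟨j, (g j).r⟩ := by
    intro i
    have h1 := e.2 (some ⟨i, (f i).r⟩)
    rw [join_p_root, hroot] at h1
    rcases hx : e.1 (some ⟨i, (f i).r⟩) with _ | ⟨j, w⟩
    · rw [← hroot] at hx
      exact absurd (e.1.injective hx) (by simp)
    · rw [hx] at h1
      refine ⟨j, ?_⟩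
      by_cases hw : w = (g j).r
      · rw [hw]
      · rw [join_p_some g hw] at h1
        simp at h1
  choose σ hσ using hr
  have hv : ∀ i v, ∃ w, e.1 (some ⟨i, v⟩) = some ⟨σ i, w⟩ := by
    intro i
    refine (f i).ind ?_ ?_
    · exact ⟨_, hσ i⟩
    · rintro v hv ⟨w, hw⟩
      have h1 := e.2 (some ⟨i, v⟩)
      rw [join_p_some f hv, hw] at h1
      rcases hx : e.1 (some ⟨i, v⟩) with _ | ⟨j, u⟩
      · rw [← hroot] at hx
        exact absurd (e.1.injective hx) (by simp)
      · rw [hx] at h1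
        by_cases hu : u = (g j).r
        · subst hu
          rw [join_p_root] at h1
          simp at h1
        · rw [join_p_some g hu] at h1
          obtain ⟨h1, -⟩ := some_inj g h1
          subst h1
          exact ⟨u, rfl⟩
  choose a ha using hv
  have hsurj : ∀ j w, ∃ i v, e.1 (some ⟨i, v⟩) = some ⟨j, w⟩ := by
    intro j w
    obtain ⟨x, hx⟩ := e.1.surjective (some ⟨j, w⟩)
    rcases x with _ | ⟨i, v⟩
    · rw [hroot] at hx; simp at hx
    · exact ⟨i, v, hx⟩
  have σinj : Function.Injective σ := by
    intro i j hij
    have h1 := hσ i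
    rw [hij, ← hσ j] at h1
    exact (some_inj f (e.1.injective h1)).1
  have σsurj : Function.Surjective σ := by
    intro j
    obtain ⟨i, v, h⟩ := hsurj j (g j).r
    rw [ha] at h
    exact ⟨i, (some_inj g h).1⟩
  have abij : ∀ i, Function.Bijective (a i) := by
    intro i
    constructor
    · intro v w h
      have h1 := ha i v
      rw [h, ← ha i w] at h1
      exact some_inj' f (e.1.injective h1)
    · intro w
      obtain ⟨j, v, h⟩ := hsurj (σ i) w
      rw [ha] at h
      obtain ⟨h1, h2⟩ := some_inj g h
      have := σinj h1
      subst this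
      exact ⟨v, eq_of_heq h2⟩
  have aroot : ∀ i, a i (f i).r = (g (σ i)).r := by
    intro i
    have := ha i (f i).r
    rw [hσ] at this
    exact some_inj' g this.symm
  refine ⟨⟨Equiv.ofBijective σ ⟨σinj, σsurj⟩, fun i => ⟨Equiv.ofBijective (a i) (abij i), ?_⟩⟩, ?_⟩
  · intro v
    change a i ((f i).p v) = (g (σ i)).p (a i v)
    by_cases hv : v = (f i).r
    · subst hv
      rw [(f i).fix, aroot, (g (σ i)).fix]
    · have h1 := e.2 (some ⟨i, v⟩)
      rw [join_p_some f hv, ha, ha, join_p_some g (by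
        rw [← aroot]; exact fun h => hv ((abij i).1 h))] at h1
      exact some_inj' g h1
  · apply Subtype.ext
    ext1 x
    rcases x with _ | ⟨i, v⟩
    · rw [hroot]; rfl
    · rw [joinIso_some, ha]; rfl

lemma card_joinIso (f : ι → PT) (g : κ → PT) :
    Nat.card (Iso (join f) (join g)) = Nat.card (Σ σ : ι ≃ κ, ∀ i, Iso (f i) (g (σ i))) :=
  (Nat.card_eq_of_bijective _ ⟨joinIso_injective f g, joinIso_surjective f g⟩).symm

/-- children of the root -/
def Child (T : PT) : Type := {c : T.V // c ≠ T.r ∧ T.p c = T.r}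

instance (T : PT) : Finite (Child T) := by unfold Child; infer_instance

/-- the branch at a child -/
noncomputable def branch (T : PT) (c : Child T) : PT where
  V := {v : T.V // ∃ k : ℕ, T.p^[k] v = c.1}
  fin := inferInstance
  p := fun v => if h : v.1 = c.1 then v else ⟨T.p v.1, by
    obtain ⟨k, hk⟩ := v.2
    cases k with
    | zero => exact absurd hk h
    | succ k => exact ⟨k, by simpa using hk⟩⟩
  r := ⟨c.1, 0, rfl⟩
  fix := by simp
  reach := by
    rintro ⟨v, k, hk⟩
    induction k generalizing v with
    | zero => exact ⟨0, by simpa using hk⟩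
    | succ k ih =>
      by_cases h : v = c.1
      · exact ⟨0, by simpa using h⟩
      · obtain ⟨l, hl⟩ := ih (T.p v) (by simpa using hk)
        refine ⟨l + 1, ?_⟩
        rw [Function.iterate_succ_apply, dif_neg h]
        exact hl

lemma exists_join (T : PT) : Nonempty (Iso (join T.branch) T) := by
  let F : Option (Σ c : Child T, (T.branch c).V) → T.V := fun x =>
    match x with
    | none => T.r
    | some y => y.2.1
  have hne : ∀ (c : Child T) (v : (T.branch c).V), v.1 ≠ T.r := by
    rintro c ⟨v, k, hk⟩ h
    simp only at h
    rw [h, iter_root] at hk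
    exact c.2.1 hk.symm
  have key : ∀ (c d : Child T) (v : T.V) (k l : ℕ), k ≤ l → T.p^[k] v = c.1 → T.p^[l] v = d.1 →
      c = d := by
    intro c d v k l hkl hk hl
    obtain ⟨m, rfl⟩ := Nat.exists_eq_add_of_le hkl
    rw [add_comm, Function.iterate_add_apply, hk] at hl
    cases m with
    | zero => exact Subtype.ext hl
    | succ m =>
      rw [Function.iterate_succ_apply, c.2.2, iter_root] at hl
      exact absurd hl.symm d.2.1
  have hF : Function.Bijective F := by
    constructor
    · rintro (_ | ⟨c, v⟩) (_ | ⟨d, w⟩) h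
      · rfl
      · exact absurd h.symm (hne d w)
      · exact absurd h (hne c v)
      · have hvw : v.1 = w.1 := h
        obtain ⟨v, k, hk⟩ := v
        obtain ⟨w, l, hl⟩ := w
        simp only at hvw
        subst hvw
        have : c = d := by
          rcases le_total k l with h | h
          · exact key c d v k l h hk hl
          · exact (key d c v l k h hl hk).symm
        subst this
        rfl
    · change ∀ v, ∃ x, F x = v
      refine T.ind ?_ ?_
      · exact ⟨none, rfl⟩
      · rintro v hv ⟨x, hx⟩
        rcases x with _ | ⟨c, w⟩
        · exact ⟨some ⟨⟨v, hv, hx.symm⟩, ⟨v, 0, rfl⟩⟩, rfl⟩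
        · obtain ⟨w, k, hk⟩ := w
          have : w = T.p v := hx
          exact ⟨some ⟨c, ⟨v, k + 1, by
            rw [Function.iterate_succ_apply, ← this]; exact hk⟩⟩, rfl⟩
  refine ⟨⟨Equiv.ofBijective F hF, ?_⟩⟩
  rintro (_ | ⟨c, v⟩)
  · exact T.fix.symm
  · by_cases h : v = (T.branch c).r
    · subst h
      rw [join_p_root]
      exact c.2.2.symm
    · rw [join_p_some _ h]
      have h' : v.1 ≠ c.1 := fun hh => h (Subtype.ext hh)
      have : (T.branch c).p v = ⟨T.p v.1, by
          obtain ⟨k, hk⟩ := v.2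
          cases k with
          | zero => exact absurd hk h'
          | succ k => exact ⟨k, by simpa using hk⟩⟩ := dif_neg h'
      rw [this]
      rfl

/-- The graph of a parent function. -/
def graph (T : PT) : SimpleGraph T.V where
  Adj u v := u ≠ v ∧ (T.p u = v ∨ T.p v = u)
  symm := ⟨fun _ _ h => ⟨h.1.symm, h.2.symm⟩⟩
  loopless := ⟨fun _ h => h.1 rfl⟩

lemma p_ne (T : PT) {v : T.V} (h : v ≠ T.r) : T.p v ≠ v := fun hh => h (T.eq_root_of_fix hh)

lemma p_p_ne (T : PT) {v : T.V} (h : v ≠ T.r) : T.p (T.p v) ≠ v := by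
  intro hh
  have h2 : ∀ k, T.p^[k] v = v ∨ T.p^[k] v = T.p v := by
    intro k
    induction k with
    | zero => left; rfl
    | succ k ih =>
      rw [Function.iterate_succ_apply']
      rcases ih with ih | ih
      · right; rw [ih]
      · left; rw [ih, hh]
  obtain ⟨k, hk⟩ := T.reach v
  rcases h2 k with h3 | h3
  · exact h (h3.symm.trans hk)
  · have : T.p v = T.r := h3.symm.trans hk
    rw [this, T.fix] at hh
    exact h hh.symm

lemma graph_isTree (T : PT) : T.graph.IsTree := by
  have hconn : T.graph.Connected := by
    have hr : ∀ v, T.graph.Reachable v T.r := by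
      refine T.ind ?_ ?_
      · exact SimpleGraph.Reachable.refl _
      · intro v hv h
        have : T.graph.Adj v (T.p v) := ⟨(T.p_ne hv).symm, Or.inl rfl⟩
        exact this.reachable.trans h
    have : Nonempty T.V := ⟨T.r⟩
    exact ⟨fun u v => (hr u).trans (hr v).symm⟩
  rw [SimpleGraph.isTree_iff_connected_and_card]
  refine ⟨hconn, le_antisymm ?_ hconn.card_vert_le_card_edgeSet_add_one⟩
  have : Function.Surjective (fun v : {v : T.V // v ≠ T.r} =>
      (⟨s(v.1, T.p v.1), ⟨(T.p_ne v.2).symm, Or.inl rfl⟩⟩ : (T.graph.edgeSet : Set _))) := by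
    rintro ⟨e, he⟩
    induction e using Sym2.ind with
    | _ u v =>
      have he' : u ≠ v ∧ (T.p u = v ∨ T.p v = u) := he
      obtain ⟨hne, h | h⟩ := he'
      · refine ⟨⟨u, fun hu => hne ?_⟩, ?_⟩
        · rw [← h, hu, T.fix]
        · simp [h]
      · refine ⟨⟨v, fun hu => hne ?_⟩, ?_⟩
        · rw [← h, hu, T.fix]
        · simp [h, Sym2.eq_swap]
  have h1 : Nat.card (T.graph.edgeSet) ≤ _ := Nat.card_le_card_of_surjective _ this
  have h2 : Nat.card {v : T.V // v ≠ T.r} + 1 = Nat.card T.V := by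
    have := Fintype.ofFinite T.V
    rw [Nat.card_eq_fintype_card, Nat.card_eq_fintype_card, Fintype.card_subtype_compl]
    have : 0 < Fintype.card T.V := Fintype.card_pos_iff.mpr ⟨T.r⟩
    simp
    omega
  omega

lemma iso_of_graph {T S : PT} (φ : T.graph ≃g S.graph) (h : φ T.r = S.r) :
    ∀ v, φ (T.p v) = S.p (φ v) := by
  refine T.ind ?_ ?_
  · rw [T.fix, h, S.fix]
  · intro v hv ih
    have hadj : T.graph.Adj v (T.p v) := ⟨(T.p_ne hv).symm, Or.inl rfl⟩
    have h2 : S.graph.Adj (φ v) (φ (T.p v)) := φ.map_adj_iff.mpr hadj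
    rcases h2.2 with h3 | h3
    · exact h3.symm
    · rw [← ih] at h3
      exact absurd (φ.injective h3) (T.p_p_ne hv)

/-- graph isomorphisms are isomorphisms of parent functions -/
def graphIsoEquiv (T S : PT) : {φ : T.graph ≃g S.graph // φ T.r = S.r} ≃ Iso T S where
  toFun φ := ⟨φ.1.toEquiv, iso_of_graph φ.1 φ.2⟩
  invFun e := ⟨⟨e.1, by
    intro u v
    simp only [graph, ← e.2, ne_eq, EmbeddingLike.apply_eq_iff_eq]⟩, e.root⟩
  left_inv φ := rfl
  right_inv e := rfl

end PT

section Classes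
open PT

lemma exists_PT {n : ℕ} (T : RTree n) : ∃ (p : Fin n → Fin n) (h1 : p T.root = T.root)
    (h2 : ∀ v, ∃ k : ℕ, p^[k] v = T.root),
    (PT.mk (Fin n) inferInstance p T.root h1 h2).graph = T.graph := by
  have hc := T.isTree.1
  have hstep : ∀ v, v ≠ T.root → ∃ w, T.graph.Adj v w ∧
      T.graph.dist w T.root < T.graph.dist v T.root := by
    intro v hv
    obtain ⟨w, hw⟩ := hc.exists_walk_length_eq_dist v T.root
    cases w with
    | nil => exact absurd rfl hv
    | cons h q =>
      refine ⟨_, h, ?_⟩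
      rw [← hw]
      have := SimpleGraph.dist_le q
      simp; omega
  choose! p hp1 hp2 using hstep
  have key : ∀ d v, T.graph.dist v T.root ≤ d → ∃ k : ℕ,
      (fun v => if v = T.root then T.root else p v)^[k] v = T.root := by
    intro d
    induction d with
    | zero =>
      intro v hv
      refine ⟨0, ?_⟩
      by_contra h
      have := hp2 v h
      omega
    | succ d ih =>
      intro v hv
      by_cases h : v = T.root
      · exact ⟨0, h⟩
      · obtain ⟨k, hk⟩ := ih (p v) (by have := hp2 v h; omega)
        exact ⟨k + 1, by rw [Function.iterate_succ_apply, if_neg h]; exact hk⟩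
  refine ⟨fun v => if v = T.root then T.root else p v, by simp, fun v => key _ v le_rfl, ?_⟩
  set P : PT := PT.mk (Fin n) inferInstance (fun v => if v = T.root then T.root else p v) T.root
    (by simp) (fun v => key _ v le_rfl) with hP
  have hadj : ∀ u v : Fin n, u ≠ v → (if u = T.root then T.root else p u) = v →
      T.graph.Adj u v := by
    intro u v huv h
    by_cases hu : u = T.root
    · rw [if_pos hu] at h; exact absurd (hu.trans h) huv
    · rw [if_neg hu] at h; rw [← h]; exact hp1 u hu
  have hle : P.graph ≤ T.graph := by
    intro u v h
    rcases h.2 with h2 | h2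
    · exact hadj u v h.1 h2
    · exact (hadj v u h.1.symm h2).symm
  have c1 := (SimpleGraph.isTree_iff_connected_and_card.mp P.graph_isTree).2
  have c2 := (SimpleGraph.isTree_iff_connected_and_card.mp T.isTree).2
  have hE : P.graph.edgeSet = T.graph.edgeSet := by
    apply Set.eq_of_subset_of_ncard_le (SimpleGraph.edgeSet_mono hle) _ (Set.toFinite _)
    change Nat.card _ ≤ Nat.card _
    have c1' : Nat.card P.graph.edgeSet + 1 = Nat.card (Fin n) := c1
    exact Nat.le_of_succ_le_succ (c2.trans c1'.symm).le
  exact SimpleGraph.edgeSet_injective hE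

/-- The parent-function tree of a rooted labeled tree. -/
noncomputable def toPT {n : ℕ} (T : RTree n) : PT :=
  PT.mk (Fin n) inferInstance (exists_PT T).choose T.root (exists_PT T).choose_spec.choose
    (exists_PT T).choose_spec.choose_spec.choose

lemma toPT_graph {n : ℕ} (T : RTree n) : (toPT T).graph = T.graph :=
  (exists_PT T).choose_spec.choose_spec.choose_spec

lemma graph_equiv_aux : ∀ (P Q : PT) (G : SimpleGraph P.V) (H : SimpleGraph Q.V),
    P.graph = G → Q.graph = H → Nonempty ({φ : G ≃g H // φ P.r = Q.r} ≃ Iso P Q) := by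
  rintro P Q _ _ rfl rfl
  exact ⟨graphIsoEquiv P Q⟩

lemma rtree_equiv {n : ℕ} (T S : RTree n) :
    Nonempty ({φ : T.graph ≃g S.graph // φ T.root = S.root} ≃ Iso (toPT T) (toPT S)) :=
  graph_equiv_aux (toPT T) (toPT S) _ _ (toPT_graph T) (toPT_graph S)

lemma isom_iff {n : ℕ} (T S : RTree n) : T.Isom S ↔ Nonempty (Iso (toPT T) (toPT S)) := by
  obtain ⟨e⟩ := rtree_equiv T S
  constructor
  · rintro ⟨φ, h⟩; exact ⟨e ⟨φ, h⟩⟩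
  · rintro ⟨i⟩; exact ⟨(e.symm i).1, (e.symm i).2⟩

lemma autCard_eq {n : ℕ} (T : RTree n) : T.autCard = Nat.card (Iso (toPT T) (toPT T)) := by
  obtain ⟨e⟩ := rtree_equiv T T
  exact Nat.card_congr e

lemma exists_RTree (P : PT) {n : ℕ} (h : Nat.card P.V = n) :
    ∃ T : RTree n, Nonempty (Iso (toPT T) P) := by
  have e : P.V ≃ Fin n := (Finite.equivFinOfCardEq h)
  let Q : PT := 
    { V := Fin n
      fin := inferInstance
      p := fun v => e (P.p (e.symm v))
      r := e P.r
      fix := by simp [P.fix]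
      reach := by
        have : ∀ v k, (fun v => e (P.p (e.symm v)))^[k] (e v) = e (P.p^[k] v) := by
          intro v k
          induction k generalizing v with
          | zero => rfl
          | succ k ih => rw [Function.iterate_succ_apply, Function.iterate_succ_apply, ← ih]; simp
        intro v
        obtain ⟨k, hk⟩ := P.reach (e.symm v)
        refine ⟨k, ?_⟩
        have h2 := this (e.symm v) k
        rw [hk, Equiv.apply_symm_apply] at h2
        exact h2 }
  let T : RTree n := ⟨Q.graph, Q.graph_isTree, Q.r⟩
  obtain ⟨f⟩ := graph_equiv_aux (toPT T) Q _ _ (toPT_graph T) rfl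
  have i1 : Iso (toPT T) Q := f ⟨RelIso.refl _, rfl⟩
  have i2 : Iso Q P := ⟨e.symm, fun v => by simp [Q]⟩
  exact ⟨T, ⟨i1.trans i2⟩⟩

lemma isom_equivalence (n : ℕ) : Equivalence (fun T S : RTree n => T.Isom S) := by
  constructor
  · intro T; exact (isom_iff T T).mpr ⟨Iso.refl _⟩
  · intro T S h; rw [isom_iff] at h ⊢; exact ⟨h.some.symm⟩
  · intro T S R h h'; rw [isom_iff] at h h' ⊢; exact ⟨h.some.trans h'.some⟩

/-- representative -/
noncomputable def rep {n : ℕ} (q : Polya n) : PT := toPT (Quot.out q)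

lemma rep_card {n : ℕ} (q : Polya n) : Nat.card (rep q).V = n := by
  change Nat.card (Fin n) = n; simp

lemma rep_inj {n : ℕ} {q q' : Polya n} (h : Nonempty (Iso (rep q) (rep q'))) : q = q' := by
  have := (isom_iff _ _).mpr h
  rw [← Quot.out_eq q, ← Quot.out_eq q']
  exact Quot.sound this

lemma exists_rep_iso (P : PT) {n : ℕ} (h : Nat.card P.V = n) :
    ∃ q : Polya n, Nonempty (Iso P (rep q)) := by
  obtain ⟨T, ⟨i⟩⟩ := exists_RTree P h
  refine ⟨Quot.mk _ T, ?_⟩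
  have h1 : (Quot.mk _ (Quot.out (Quot.mk _ T : Polya n)) : Polya n) = Quot.mk _ T :=
    Quot.out_eq _
  have h2 := ((isom_equivalence n).quot_mk_eq_iff _ _).mp h1
  obtain ⟨j⟩ := (isom_iff _ _).mp h2
  exact ⟨i.symm.trans j.symm⟩

/-- classes of trees with at most `N` vertices -/
abbrev Cl (N : ℕ) : Type := Σ k : Fin N, Polya (k.1 + 1)

noncomputable abbrev repC {N : ℕ} (S : Cl N) : PT := rep S.2

lemma repC_inj {N : ℕ} {S S' : Cl N} (h : Nonempty (Iso (repC S) (repC S'))) : S = S' := by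
  obtain ⟨k, q⟩ := S
  obtain ⟨l, q'⟩ := S'
  have h1 : k.1 + 1 = l.1 + 1 := by
    have := h.some.card_eq
    rwa [rep_card, rep_card] at this
  have : k = l := Fin.ext (by omega)
  subst this
  have h3 : q = q' := rep_inj h
  rw [h3]

lemma exists_repC {N : ℕ} (P : PT) (h : Nat.card P.V ≤ N) : ∃ S : Cl N, Nonempty (Iso P (repC S)) := by
  have : 0 < Nat.card P.V := by
    have : Nonempty P.V := ⟨P.r⟩
    exact Nat.card_pos
  obtain ⟨m, hm⟩ := Nat.exists_eq_succ_of_ne_zero this.ne'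
  obtain ⟨q, hq⟩ := exists_rep_iso P (n := m + 1) hm
  exact ⟨⟨⟨m, by omega⟩, q⟩, hq⟩

/-- the tree with `m S` branches of class `S` -/
noncomputable def J {N : ℕ} (m : Cl N → ℕ) : PT := join (fun x : Σ S, Fin (m S) => repC x.1)

lemma J_card {N : ℕ} (m : Cl N → ℕ) :
    Nat.card (J m).V = (∑ S : Cl N, m S * (S.1.1 + 1)) + 1 := by
  change Nat.card (Option (Σ x : (Σ S, Fin (m S)), (repC x.1).V)) = _
  rw [Finite.card_option, Nat.card_sigma]
  simp_rw [repC, rep_card]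
  rw [Fintype.sum_sigma]
  simp

lemma iso_join_iff {ι κ : Type} [Finite ι] [Finite κ] (f : ι → PT) (g : κ → PT) :
    Nonempty (Iso (join f) (join g)) ↔ ∃ σ : ι ≃ κ, ∀ i, Nonempty (Iso (f i) (g (σ i))) := by
  constructor
  · rintro ⟨e⟩
    obtain ⟨⟨σ, a⟩, -⟩ := joinIso_surjective f g e
    exact ⟨σ, fun i => ⟨a i⟩⟩
  · rintro ⟨σ, h⟩
    exact ⟨joinIso f g ⟨σ, fun i => (h i).some⟩⟩

lemma J_inj {N : ℕ} {m m' : Cl N → ℕ} (h : Nonempty (Iso (J m) (J m'))) : m = m' := by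
  obtain ⟨σ, hσ⟩ := (iso_join_iff _ _).mp h
  have h1 : ∀ x, x.1 = (σ x).1 := fun x => repC_inj (hσ x)
  funext S
  have h2 : Nat.card {x : Σ S, Fin (m S) // x.1 = S} = Nat.card {x : Σ S, Fin (m' S) // x.1 = S} :=
    Nat.card_congr (σ.subtypeEquiv (fun x => by rw [h1]))
  rw [Nat.card_congr (Equiv.sigmaSubtype S), Nat.card_congr (Equiv.sigmaSubtype S)] at h2
  simpa using h2

lemma exists_J {N : ℕ} (P : PT) (h : Nat.card P.V ≤ N + 1) :
    ∃ m : Cl N → ℕ, Nonempty (Iso P (J m)) := by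
  obtain ⟨e⟩ := P.exists_join
  have hb : ∀ c, Nat.card (P.branch c).V ≤ N := by
    intro c
    have : Nat.card (Option (P.branch c).V) ≤ Nat.card (join P.branch).V := by
      change _ ≤ Nat.card (Option (Σ c, (P.branch c).V))
      exact Nat.card_le_card_of_injective 
        (Option.map (fun v => (⟨c, v⟩ : Σ c, (P.branch c).V)))
        (Option.map_injective (fun v w h => by simpa using h))
    rw [Finite.card_option, e.card_eq] at this
    omega
  choose cl hcl using fun c => exists_repC (P.branch c) (hb c)
  refine ⟨fun S => Nat.card {c // cl c = S}, ?_⟩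
  have h2 : Nonempty (Iso (join P.branch) (J (fun S => Nat.card {c // cl c = S}))) := by
    refine (iso_join_iff _ _).mpr ⟨(Equiv.sigmaFiberEquiv cl).symm.trans
      (Equiv.sigmaCongrRight fun S => Finite.equivFin _), ?_⟩
    intro c
    exact hcl c
  exact ⟨e.symm.trans h2.some⟩

lemma J_aut {N : ℕ} (m : Cl N → ℕ) : Nat.card (Iso (J m) (J m)) =
    ∏ S : Cl N, ((m S).factorial * (Nat.card (Iso (repC S) (repC S))) ^ m S) := by
  rw [J, card_joinIso, Nat.card_sigma]
  simp_rw [Nat.card_pi]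
  have h1 : ∀ σ : (Σ S, Fin (m S)) ≃ (Σ S, Fin (m S)),
      (∏ x, Nat.card (Iso (repC x.1) (repC (σ x).1))) =
      if (Sigma.fst ∘ σ = Sigma.fst) then
        ∏ x : (Σ S, Fin (m S)), Nat.card (Iso (repC x.1) (repC x.1)) else 0 := by
    intro σ
    split_ifs with h
    · apply Finset.prod_congr rfl
      intro x _
      have : (σ x).1 = x.1 := congrFun h x
      rw [this]
    · obtain ⟨x, hx⟩ : ∃ x, (σ x).1 ≠ x.1 := by
        by_contra! hh
        exact h (funext hh)
      apply Finset.prod_eq_zero (Finset.mem_univ x)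
      rw [Nat.card_eq_zero]
      left
      by_contra hh
      rw [not_isEmpty_iff] at hh
      exact hx (repC_inj hh).symm
  rw [Finset.sum_congr rfl (fun σ _ => h1 σ), ← Finset.sum_filter, Finset.sum_const, smul_eq_mul,
    Finset.prod_mul_distrib, Fintype.prod_sigma]
  simp only [Finset.prod_const, Finset.card_univ, Fintype.card_fin]
  congr 1
  rw [← Fintype.card_subtype, DomMulAct.stabilizer_card]
  apply Finset.prod_congr rfl
  intro S _
  rw [← Nat.card_eq_fintype_card, Nat.card_congr (Equiv.sigmaSubtype S)]
  simp

end Classes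

section Final
open PowerSeries PT

lemma coeff_subst_monomial (f : PowerSeries ℝ) (a : ℝ) {s : ℕ} (hs : 1 ≤ s) (l : ℕ) :
    coeff l (f.subst (C a * X ^ s : PowerSeries ℝ)) =
      if s ∣ l then coeff (l / s) f * a ^ (l / s) else 0 := by
  rw [coeff_subst_trunc (by simp; omega)]
  simp_rw [mul_pow, ← map_pow, coeff_C_mul, ← pow_mul, coeff_X_pow]
  split_ifs with h
  · obtain ⟨m, rfl⟩ := h
    rw [Nat.mul_div_cancel_left _ (by omega)]
    rw [Finset.sum_eq_single m]
    · simp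
    · intro b _ hb
      rw [if_neg]
      · simp
      · intro h; exact hb (Nat.eq_of_mul_eq_mul_left (by omega) h).symm
    · intro h
      exfalso; apply h
      rw [Finset.mem_range]
      nlinarith
  · apply Finset.sum_eq_zero
    intro k _
    rw [if_neg]
    · simp
    · rintro rfl; exact h (Dvd.intro _ rfl)



lemma A_eq (A : ∀ n : ℕ, Polya n → ℕ)
    (hA : ∀ (n : ℕ) (T : RTree n), A n (Quot.mk _ T) = T.autCard)
    {n : ℕ} (q : Polya n) : A n q = Nat.card (Iso (rep q) (rep q)) := by
  conv_lhs => rw [← Quot.out_eq q]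
  rw [hA, autCard_eq]; rfl

lemma step_a (A : ∀ n : ℕ, Polya n → ℕ)
    (hA : ∀ (n : ℕ) (T : RTree n), A n (Quot.mk _ T) = T.autCard)
    (n : ℕ) :
    ∑ q : Polya (n + 1), ((A (n + 1) q : ℝ)) ^ (-(2:ℝ)) =
      coeff n (∏ S : Cl n, phi.subst (C ((A _ S.2 : ℝ) ^ (-(2:ℝ))) * X ^ (S.1.1 + 1) : PowerSeries ℝ)) := by
  rw [coeff_prod]
  choose m hm using fun q : Polya (n + 1) => exists_J (N := n) (rep q) (by rw [rep_card])
  have hmc : ∀ q, ∑ S : Cl n, m q S * (S.1.1 + 1) = n := by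
    intro q
    have := (hm q).some.card_eq
    rw [rep_card, J_card] at this
    omega
  refine Finset.sum_of_injOn
    (fun q => Finsupp.equivFunOnFinite.symm (fun S => m q S * (S.1.1 + 1))) ?_ ?_ ?_ ?_
  · intro q _ q' _ h
    have h1 : ∀ S : Cl n, m q S * (S.1.1 + 1) = m q' S * (S.1.1 + 1) := fun S =>
      DFunLike.congr_fun h S
    have h2 : m q = m q' := funext fun S => Nat.eq_of_mul_eq_mul_right (by omega) (h1 S)
    apply rep_inj
    have i1 := (hm q).some
    rw [h2] at i1
    exact ⟨i1.trans (hm q').some.symm⟩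
  · intro q _
    simp [Finset.mem_finsuppAntidiag, hmc]
  · intro l hl hl'
    by_contra h
    apply hl'
    have hd : ∀ S : Cl n, (S.1.1 + 1) ∣ l S := by
      intro S
      by_contra hS
      apply h
      apply Finset.prod_eq_zero (Finset.mem_univ S)
      rw [coeff_subst_monomial _ _ (by omega), if_neg hS]
    choose c hc using hd
    have hsum : ∑ S : Cl n, c S * (S.1.1 + 1) = n := by
      rw [Finset.mem_finsuppAntidiag] at hl
      conv_rhs => rw [← hl.1]
      apply Finset.sum_congr rfl
      intro S _
      rw [hc S, mul_comm]
    obtain ⟨q, ⟨i⟩⟩ := exists_rep_iso (J c) (n := n + 1) (by rw [J_card, hsum])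
    refine ⟨q, by simp, ?_⟩
    have : c = m q := J_inj ⟨i.trans (hm q).some⟩
    ext S
    simp [hc S, this, mul_comm]
  · intro q _
    rw [A_eq A hA q, (hm q).some.card_aut, J_aut]
    push_cast
    rw [← Real.finsetProd_rpow _ _ (fun S _ => by positivity)]
    apply Finset.prod_congr rfl
    intro S _
    rw [coeff_subst_monomial _ _ (by omega)]
    simp only [Finsupp.equivFunOnFinite_symm_apply_apply]
    rw [if_pos (Dvd.intro_left _ rfl), Nat.mul_div_cancel _ (by omega),
      Real.mul_rpow (by positivity) (by positivity), A_eq A hA]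
    congr 1
    · simp [phi]
    · rw [← Real.rpow_natCast, ← Real.rpow_natCast, ← Real.rpow_mul (by positivity),
        ← Real.rpow_mul (by positivity), mul_comm]


lemma constantCoeff_polyaSum (F : ℝ → PowerSeries ℝ) (t : ℝ) : constantCoeff (polyaSum F t) = 0 := by
  rw [← coeff_zero_eq_constantCoeff_apply]; simp [polyaSum]

lemma constantCoeff_L (a : ℝ) (s : ℕ) :
    constantCoeff ((logOf phi).subst (C a * X ^ (s + 1) : PowerSeries ℝ)) = 0 := by
  rw [← coeff_zero_eq_constantCoeff_apply, coeff_subst_monomial _ _ (by omega)]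
  simp [constantCoeff_logOf constantCoeff_phi]

lemma step_c (A : ∀ n : ℕ, Polya n → ℕ)
    (F : ℝ → PowerSeries ℝ)
    (hF : ∀ (t : ℝ) (n : ℕ),
      PowerSeries.coeff n (F t) =
        if n = 0 then 0 else ∑ q : Polya n, ((A n q : ℝ)) ^ (-t))
    (n k : ℕ) (hk : k ≤ n) :
    coeff k (∑ S : Cl n, (logOf phi).subst
      (C ((A _ S.2 : ℝ) ^ (-(2:ℝ))) * X ^ (S.1.1 + 1) : PowerSeries ℝ)) =
    coeff k (polyaSum F 2) := by
  rcases Nat.eq_zero_or_pos k with rfl | hk0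
  · rw [coeff_zero_eq_constantCoeff_apply, coeff_zero_eq_constantCoeff_apply,
      constantCoeff_polyaSum, map_sum]
    exact Finset.sum_eq_zero fun S _ => constantCoeff_L _ _
  rw [map_sum, Fintype.sum_sigma]
  simp_rw [coeff_subst_monomial (logOf phi) _ (Nat.le_add_left 1 _)]
  let g : ℕ → ℝ := fun d => ∑ q : Polya d,
    coeff (k / d) (logOf phi) * ((A d q : ℝ) ^ (-(2:ℝ))) ^ (k / d)
  have e1 : ∀ i : Fin n, (∑ q : Polya (i.1 + 1), if i.1 + 1 ∣ k then
      coeff (k / (i.1 + 1)) (logOf phi) * ((A _ q : ℝ) ^ (-(2:ℝ))) ^ (k / (i.1 + 1)) else 0) =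
      (fun i : ℕ => if i + 1 ∣ k then g (i + 1) else 0) i.1 := by
    intro i
    simp only [g]
    split_ifs <;> simp
  rw [Finset.sum_congr rfl (fun i _ => e1 i), Fin.sum_univ_eq_sum_range
    (fun i : ℕ => if i + 1 ∣ k then g (i + 1) else 0) n]
  have e2 : ∑ i ∈ Finset.range n, (if i + 1 ∣ k then g (i + 1) else 0) =
      ∑ d ∈ k.divisors, g d := by
    rw [Finset.range_eq_Ico, Finset.sum_Ico_add' (fun i => if i ∣ k then g i else 0) 0 n 1,
      ← Finset.sum_filter]
    apply Finset.sum_congr _ (fun _ _ => rfl)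
    ext d
    simp only [Finset.mem_filter, Finset.mem_Ico, Nat.mem_divisors]
    constructor
    · rintro ⟨_, h⟩; exact ⟨h, by omega⟩
    · rintro ⟨h, _⟩
      have := Nat.le_of_dvd hk0 h
      have := Nat.pos_of_dvd_of_pos h hk0
      exact ⟨by omega, h⟩
  rw [e2, ← Nat.sum_div_divisors, polyaSum, coeff_mk]
  simp only [mul_ite, mul_zero]
  rw [← Finset.sum_filter]
  have e3 : (Finset.Icc 1 k).filter (fun j => j ∣ k) = k.divisors := by
    ext d
    simp only [Finset.mem_filter, Finset.mem_Icc, Nat.mem_divisors]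
    constructor
    · rintro ⟨_, h⟩; exact ⟨h, by omega⟩
    · rintro ⟨h, _⟩
      have := Nat.le_of_dvd hk0 h
      have := Nat.pos_of_dvd_of_pos h hk0
      exact ⟨by omega, h⟩
  rw [e3]
  apply Finset.sum_congr rfl
  intro j hj
  obtain ⟨hj, -⟩ := Nat.mem_divisors.mp hj
  have hj0 := Nat.pos_of_dvd_of_pos hj hk0
  have hkj : k / j ≠ 0 := (Nat.div_pos (Nat.le_of_dvd hk0 hj) hj0).ne'
  simp only [g]
  rw [Nat.div_div_self hj hk0.ne', hF, if_neg hkj, coeff_logOf_phi hj0, Finset.mul_sum]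
  apply Finset.sum_congr rfl
  intro q _
  rw [← Real.rpow_natCast, ← Real.rpow_mul (by positivity)]
  congr 2; ring

lemma functional_eq (A : ∀ n : ℕ, Polya n → ℕ)
    (hA : ∀ (n : ℕ) (T : RTree n), A n (Quot.mk _ T) = T.autCard)
    (F : ℝ → PowerSeries ℝ)
    (hF : ∀ (t : ℝ) (n : ℕ),
      PowerSeries.coeff n (F t) =
        if n = 0 then 0 else ∑ q : Polya n, ((A n q : ℝ)) ^ (-t))
    : F 2 = X * pexp (polyaSum F 2) := by
  ext n
  cases n with
  | zero => rw [hF]; simp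
  | succ n =>
    rw [coeff_succ_X_mul, hF, if_neg (Nat.succ_ne_zero n), step_a A hA n]
    have e : ∀ S : Cl n, phi.subst
        (C ((A _ S.2 : ℝ) ^ (-(2:ℝ))) * X ^ (S.1.1 + 1) : PowerSeries ℝ) =
        pexp ((logOf phi).subst
          (C ((A _ S.2 : ℝ) ^ (-(2:ℝ))) * X ^ (S.1.1 + 1) : PowerSeries ℝ)) := by
      intro S
      have h0 : constantCoeff (logOf phi) = 0 := constantCoeff_logOf constantCoeff_phi
      rw [pexp_eq (constantCoeff_L _ _), ← subst_comp_subst_apply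
        (HasSubst.of_constantCoeff_zero' h0) (HasSubst.of_constantCoeff_zero' (by simp)),
        ← pexp_eq h0, pexp_logOf constantCoeff_phi]
    rw [Finset.prod_congr rfl (fun S _ => e S), ← pexp_sum _ _ (fun S => constantCoeff_L _ _)]
    apply coeff_pexp_congr
    · rw [map_sum]; exact Finset.sum_eq_zero fun S _ => constantCoeff_L _ _
    · exact constantCoeff_polyaSum F 2
    · exact fun k hk => step_c A F hF n k hk

lemma xi_eq (A : ∀ n : ℕ, Polya n → ℕ)
    (hA : ∀ (n : ℕ) (T : RTree n), A n (Quot.mk _ T) = T.autCard)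
    (F : ℝ → PowerSeries ℝ)
    (hF : ∀ (t : ℝ) (n : ℕ),
      PowerSeries.coeff n (F t) =
        if n = 0 then 0 else ∑ q : Polya n, ((A n q : ℝ)) ^ (-t))
    : F 2 = xiSeries F * pexp (F 2) := by
  conv_lhs => rw [functional_eq A hA F hF]
  rw [xiSeries, mul_assoc]
  congr 1
  rw [← pexp_add]
  · congr 1
    ext n
    rw [map_add, polyaSum, coeff_mk, coeff_mk]
    rcases Nat.eq_zero_or_pos n with rfl | hn
    · simp [hF]
    · rw [← Finset.insert_Icc_add_one_left_eq_Icc hn, Finset.sum_insert (by simp), add_comm]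
      congr 1
      simp [polyaC_one]
  · rw [← coeff_zero_eq_constantCoeff_apply]; simp
  · rw [← coeff_zero_eq_constantCoeff_apply, hF]; simp

end Final

/-- Let `Y` be the tree function, the unique formal power
series with zero constant term satisfying `Y = X·exp(Y)`, and let `F t` be the
power series whose `n`-th coefficient, for `n ≥ 1`, is `∑ |Aut(T)|^{−t}` over
the isomorphism classes of rooted labeled trees on `n` vertices.  Then
`F 2 = Y ∘ Ξ` where `Ξ = X·exp(∑_{j ≥ 2} (c(j,2)/j)·F_{2j}(X^j))`. -/
theorem polya_tree_function_composition
    (A : ∀ n : ℕ, Polya n → ℕ)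
    (hA : ∀ (n : ℕ) (T : RTree n), A n (Quot.mk _ T) = T.autCard)
    (F : ℝ → PowerSeries ℝ)
    (hF : ∀ (t : ℝ) (n : ℕ),
      PowerSeries.coeff n (F t) =
        if n = 0 then 0 else ∑ q : Polya n, ((A n q : ℝ)) ^ (-t))
    (Y : PowerSeries ℝ)
    (hY0 : PowerSeries.constantCoeff Y = 0)
    (hY : Y = PowerSeries.X * pexp Y) :
    F 2 = pcomp Y (xiSeries F) := by
  refine tree_comp ?_ hY0 hY (xi_eq A hA F hF)
  simp [xiSeries]
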